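/- arXiv:1507.04471 — 3 statements merged into one kernel-verified Lean document; each statement's English description precedes it below -/
import Mathlib

section
/- Let Z be a simple d-cycle on [n] over F_2. Then there exists a simple rational d-cycle W on [n] such that Z is contained in the support of W. -/
open Finset symmDiff

/-- The vertex set `[n] = {1, …, n}`. -/
def rng (n : ℕ) : Finset ℕ := Finset.Icc 1 n

/-- The set of `d`-simplices (i.e. `(d+1)`-element subsets) on the vertex set `V`. -/
def simplices (V : Finset ℕ) (d : ℕ) : Finset (Finset ℕ) :=
  V.powerset.filter fun σ => σ.card = d + 1

/-- The mod-2 boundary of a set `X` of simplices: the set of faces `τ` of codimension one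
(`|τ| + 1 = |σ|`) contained in an odd number of members of `X`. -/
def bd (X : Finset (Finset ℕ)) : Finset (Finset ℕ) :=
  (X.biUnion fun σ => σ.powerset).filter
    fun τ => Odd (X.filter fun σ => τ ⊆ σ ∧ τ.card + 1 = σ.card).card

/-- A set of simplices is acyclic (a forest) over `F_2` if no nonempty subset has
empty boundary. -/
def IsAcyclic (F : Finset (Finset ℕ)) : Prop :=
  ∀ Y ⊆ F, Y ≠ ∅ → bd Y ≠ ∅

/-- A `d`-hypertree on `V`: a maximal acyclic set of `d`-simplices on `V`. -/
def IsHypertreeOn (V : Finset ℕ) (d : ℕ) (T : Finset (Finset ℕ)) : Prop :=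
  T ⊆ simplices V d ∧ IsAcyclic T ∧
    ∀ G, T ⊆ G → G ⊆ simplices V d → IsAcyclic G → G = T

/-- A simple cycle over `F_2`: a nonempty set with empty boundary, no nonempty proper
subset of which has empty boundary. -/
def IsSimpleCycle (Z : Finset (Finset ℕ)) : Prop :=
  Z ≠ ∅ ∧ bd Z = ∅ ∧ ∀ Y ⊂ Z, Y ≠ ∅ → bd Y ≠ ∅

/-- Collapsibility: `X` can be reduced to `∅` by repeatedly removing a simplex `σ ∈ X`
containing a codimension-one face contained in no other current member of `X`. -/
inductive Collapsible : Finset (Finset ℕ) → Prop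
  | empty : Collapsible ∅
  | step (X : Finset (Finset ℕ)) (σ τ : Finset ℕ) (hσ : σ ∈ X) (hτ : τ ⊆ σ)
      (hcard : τ.card + 1 = σ.card) (huniq : ∀ σ' ∈ X, τ ⊆ σ' → σ' = σ)
      (h : Collapsible (X.erase σ)) : Collapsible X

/-- The cone over `X` with apex `v`. -/
def cone (v : ℕ) (X : Finset (Finset ℕ)) : Finset (Finset ℕ) :=
  X.image (insert v)

/-- The link of the vertex `v` in `X`. -/
def link (v : ℕ) (X : Finset (Finset ℕ)) : Finset (Finset ℕ) :=
  (X.filter fun σ => v ∈ σ).image fun σ => σ.erase v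

/-- `fill Z T`: the subset `F ⊆ T` with `∂F = Z` (when it exists; it is unique when `T`
is a hypertree and `Z` a cycle). -/
noncomputable def fill (Z T : Finset (Finset ℕ)) : Finset (Finset ℕ) :=
  if h : ∃ F, F ⊆ T ∧ bd F = Z then h.choose else ∅

/-- The average filling-volume `μ(T)` of a `d`-hypertree `T` on `[n]`. -/
noncomputable def fillVolAvg (n d : ℕ) (T : Finset (Finset ℕ)) : ℝ :=
  (∑ σ ∈ simplices (rng n) d, ((fill (bd {σ}) T).card : ℝ)) / (n.choose (d + 1) : ℝ)

open Classical in
/-- The cut of `τ` in `T`: the set of `d`-simplices `σ` on `[n]` such that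
`T ⊕ {τ} ⊕ {σ}` is a `d`-hypertree on `[n]`. -/
noncomputable def cut (n d : ℕ) (τ : Finset ℕ) (T : Finset (Finset ℕ)) : Finset (Finset ℕ) :=
  (simplices (rng n) d).filter fun σ => IsHypertreeOn (rng n) d ((T ∆ {τ}) ∆ {σ})

/-- The rational boundary operator: for a `d`-chain `C` on `[n]` (given as a coefficient
function), `rbd n d C τ` is the coefficient of `τ` in `∂C`, where
`∂σ = Σ_{i} (-1)^i (σ ∖ {v_i})` for `σ = {v_0 < … < v_d}`. -/
def rbd (n d : ℕ) (C : Finset ℕ → ℚ) : Finset ℕ → ℚ :=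
  fun τ => ∑ σ ∈ simplices (rng n) d, ∑ v ∈ σ,
    if σ.erase v = τ then (-1 : ℚ) ^ (σ.filter (· < v)).card * C σ else 0

/-- A rational `d`-chain on `[n]`: supported on `d`-simplices on `[n]`. -/
def IsQChain (n d : ℕ) (C : Finset ℕ → ℚ) : Prop :=
  ∀ σ, C σ ≠ 0 → σ ∈ simplices (rng n) d

/-- A rational `d`-cycle on `[n]`. -/
def IsQCycle (n d : ℕ) (C : Finset ℕ → ℚ) : Prop :=
  IsQChain n d C ∧ rbd n d C = 0

/-- A simple rational `d`-cycle: nonzero, and no nonzero rational `d`-cycle has support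
properly contained in its support. -/
def IsSimpleQCycle (n d : ℕ) (C : Finset ℕ → ℚ) : Prop :=
  IsQCycle n d C ∧ C ≠ 0 ∧
    ∀ W, IsQCycle n d W → Function.support W ⊂ Function.support C → W = 0

/-- Boundary operator written through cofaces. -/
def DD {R : Type*} [CommRing R] (n : ℕ) (C : Finset ℕ → R) (τ : Finset ℕ) : R :=
  ∑ v ∈ rng n, if v ∉ τ then (-1 : R) ^ (τ.filter (· < v)).card * C (insert v τ) else 0

lemma mem_simp {n d : ℕ} {σ : Finset ℕ} :
    σ ∈ simplices (rng n) d ↔ σ ⊆ rng n ∧ σ.card = d + 1 := by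
  simp [simplices]

lemma rbd_eq_DD (n d : ℕ) (C : Finset ℕ → ℚ) (hC : IsQChain n d C) (τ : Finset ℕ) :
    rbd n d C τ = DD n C τ := by
  unfold rbd DD
  have h1 : ∀ σ ∈ simplices (rng n) d, (∑ v ∈ σ,
      if σ.erase v = τ then (-1 : ℚ) ^ (σ.filter (· < v)).card * C σ else 0) =
      ∑ v ∈ rng n, if v ∈ σ ∧ σ.erase v = τ then (-1 : ℚ) ^ (σ.filter (· < v)).card * C σ else 0 := by
    intro σ hσ
    rw [mem_simp] at hσ
    rw [← Finset.sum_subset hσ.1]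
    · apply Finset.sum_congr rfl
      intro v hv
      simp [hv]
    · intro v _ hv
      simp [hv]
  rw [Finset.sum_congr rfl h1, Finset.sum_comm]
  apply Finset.sum_congr rfl
  intro v hv
  by_cases hvt : v ∈ τ
  · simp only [hvt, not_true_eq_false, if_false]
    apply Finset.sum_eq_zero
    intro σ _
    rw [if_neg]
    rintro ⟨_, rfl⟩
    simp at hvt
  · simp only [hvt, not_false_eq_true, if_true]
    have hcount : ((insert v τ).filter (· < v)).card = (τ.filter (· < v)).card := by
      congr 1
      ext x
      simp only [mem_filter, mem_insert]
      grind
    have key : ∀ σ : Finset ℕ, (v ∈ σ ∧ σ.erase v = τ) ↔ insert v τ = σ := by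
      intro σ
      constructor
      · rintro ⟨h, rfl⟩
        exact Finset.insert_erase h
      · rintro rfl
        exact ⟨Finset.mem_insert_self _ _, Finset.erase_insert hvt⟩
    simp only [key]
    rw [Finset.sum_ite_eq]
    split_ifs with h
    · rw [hcount]
    · have : C (insert v τ) = 0 := by
        by_contra hne
        exact h (hC _ hne)
      rw [this, mul_zero]

lemma sgn_insert {R : Type*} [CommRing R] (u v : ℕ) (τ : Finset ℕ) (hv : v ∉ τ) :
    (-1 : R) ^ ((insert v τ).filter (· < u)).card =
      (if v < u then -1 else 1) * (-1 : R) ^ (τ.filter (· < u)).card := by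
  rw [Finset.filter_insert]
  split_ifs with h
  · rw [Finset.card_insert_of_notMem (by simp [hv]), pow_succ]; ring
  · simp

lemma DD_DD (n : ℕ) (C : Finset ℕ → ℤ) (τ : Finset ℕ) : DD n (DD n C) τ = 0 := by
  have h : DD n (DD n C) τ = ∑ v ∈ rng n, ∑ u ∈ rng n,
      if v ∉ τ ∧ u ∉ τ ∧ u ≠ v then (if v < u then (-1 : ℤ) else 1) *
        (-1) ^ (τ.filter (· < u)).card * (-1) ^ (τ.filter (· < v)).card *
        C (insert u (insert v τ)) else 0 := by
    unfold DD
    apply Finset.sum_congr rfl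
    intro v _
    by_cases hv : v ∉ τ
    · rw [if_pos hv, Finset.mul_sum]
      apply Finset.sum_congr rfl
      intro u _
      by_cases hu : u ∉ insert v τ
      · rw [if_pos hu, sgn_insert u v τ hv]
        have h2 : u ≠ v ∧ u ∉ τ := by simpa using hu
        rw [if_pos (show v ∉ τ ∧ u ∉ τ ∧ u ≠ v from ⟨hv, h2.2, h2.1⟩)]
        ring
      · rw [if_neg hu, if_neg]
        · simp
        · rintro ⟨_, h1, h2⟩
          exact hu (by simp [h1, h2])
    · rw [if_neg hv]
      symm
      apply Finset.sum_eq_zero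
      intro u _
      rw [if_neg]
      tauto
  have h2 : DD n (DD n C) τ = - DD n (DD n C) τ := by
    conv_lhs => rw [h, Finset.sum_comm]
    rw [h, ← Finset.sum_neg_distrib]
    apply Finset.sum_congr rfl
    intro v _
    rw [← Finset.sum_neg_distrib]
    apply Finset.sum_congr rfl
    intro u _
    by_cases hc : v ∉ τ ∧ u ∉ τ ∧ u ≠ v
    · rw [if_pos hc, if_pos ⟨hc.2.1, hc.1, hc.2.2.symm⟩, Finset.insert_comm v u]
      rcases lt_or_gt_of_ne hc.2.2 with h3 | h3
      · rw [if_pos h3, if_neg (by omega)]; ring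
      · rw [if_neg (by omega), if_pos h3]; ring
    · rw [if_neg hc, if_neg (by tauto)]; simp
  omega

lemma DD_cast {R S : Type*} [CommRing R] [CommRing S] (f : R →+* S) (n : ℕ) (C : Finset ℕ → R)
    (τ : Finset ℕ) : f (DD n C τ) = DD n (fun σ => f (C σ)) τ := by
  unfold DD
  rw [map_sum]
  apply Finset.sum_congr rfl
  intro v _
  split_ifs <;> simp

lemma DD_lin {R ι : Type*} [CommRing R] (n : ℕ) (s : Finset ι) (c : ι → R)
    (u : ι → Finset ℕ → R) (τ : Finset ℕ) :
    DD n (fun σ => ∑ i ∈ s, c i * u i σ) τ = ∑ i ∈ s, c i * DD n (u i) τ := by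
  unfold DD
  simp only [Finset.mul_sum (rng n)]
  rw [Finset.sum_comm (s := s)]
  apply Finset.sum_congr rfl
  intro v _
  by_cases hv : v ∈ τ
  · simp [hv]
  · simp only [hv, not_false_eq_true, if_true]
    rw [Finset.mul_sum]
    apply Finset.sum_congr rfl
    intro i _
    ring

/-- Indicator mod 2. -/
def ind (X : Finset (Finset ℕ)) (σ : Finset ℕ) : ZMod 2 := if σ ∈ X then 1 else 0

lemma DD_ind (n d : ℕ) (X : Finset (Finset ℕ)) (hX : X ⊆ simplices (rng n) d) (τ : Finset ℕ) :
    DD n (ind X) τ = ((X.filter fun σ => τ ⊆ σ ∧ τ.card + 1 = σ.card).card : ZMod 2) := by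
  have h : (X.filter fun σ => τ ⊆ σ ∧ τ.card + 1 = σ.card) =
      ((rng n).filter fun v => v ∉ τ ∧ insert v τ ∈ X).image (fun v => insert v τ) := by
    ext σ
    simp only [mem_filter, mem_image]
    constructor
    · rintro ⟨h1, h2, h3⟩
      obtain ⟨v, hv, rfl⟩ := Finset.exists_eq_insert_iff.2 ⟨h2, h3⟩
      exact ⟨v, ⟨(mem_simp.1 (hX h1)).1 (by simp), hv, h1⟩, rfl⟩
    · rintro ⟨v, ⟨h1, h2, h3⟩, rfl⟩
      exact ⟨h3, Finset.subset_insert _ _, (Finset.card_insert_of_notMem h2).symm⟩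
  rw [h, Finset.card_image_of_injOn, Finset.card_filter]
  · unfold DD ind
    push_cast
    apply Finset.sum_congr rfl
    intro v _
    have : (-1 : ZMod 2) = 1 := by decide
    rw [this]
    by_cases h1 : v ∈ τ <;> by_cases h2 : insert v τ ∈ X <;> simp [h1, h2]
  · intro a ha b hb hab
    simp only [coe_filter, Set.mem_ofPred_eq] at ha hb
    have h1 : a ∈ insert b τ := by
      rw [← show insert a τ = insert b τ from hab]; simp
    rcases Finset.mem_insert.1 h1 with h | h
    · exact h
    · exact absurd h ha.2.1

lemma bd_iff (n d : ℕ) (X : Finset (Finset ℕ)) (hX : X ⊆ simplices (rng n) d) :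
    bd X = ∅ ↔ ∀ τ, DD n (ind X) τ = 0 := by
  simp_rw [DD_ind n d X hX, ZMod.natCast_eq_zero_iff_even]
  unfold bd
  rw [Finset.filter_eq_empty_iff]
  constructor
  · intro h τ
    by_cases hτ : τ ∈ X.biUnion fun σ => σ.powerset
    · exact Nat.not_odd_iff_even.1 (h hτ)
    · rw [Finset.filter_false_of_mem]
      · simp
      · intro σ hσ h2
        apply hτ
        simp only [mem_biUnion, mem_powerset]
        exact ⟨σ, hσ, h2.1⟩
  · intro h τ _
    exact Nat.not_odd_iff_even.2 (h τ)

lemma reduce (n d : ℕ) (w : Finset ℕ → ℤ) (hw : ∀ τ, DD n w τ = 0)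
    (hc : ∀ σ, w σ ≠ 0 → σ ∈ simplices (rng n) d) :
    bd ((simplices (rng n) d).filter fun σ => Odd (w σ)) = ∅ := by
  rw [bd_iff n d _ (Finset.filter_subset _ _)]
  intro τ
  have h := DD_cast (Int.castRingHom (ZMod 2)) n w τ
  rw [hw, map_zero] at h
  rw [h]
  congr 1
  funext σ
  unfold ind
  by_cases h1 : Odd (w σ)
  · have h0 : w σ ≠ 0 := by rintro h0; simp [h0] at h1
    rw [if_pos (by simp [h1, hc σ h0])]
    exact ((ZMod.intCast_eq_one_iff_odd).2 h1).symm
  · rw [if_neg (by simp [h1])]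
    exact ((ZMod.intCast_eq_zero_iff_even).2 (Int.not_odd_iff_even.1 h1)).symm

lemma DD_ne {R : Type*} [CommRing R] {n : ℕ} {C : Finset ℕ → R} {τ : Finset ℕ}
    (h : DD n C τ ≠ 0) : ∃ v ∈ rng n, v ∉ τ ∧ C (insert v τ) ≠ 0 := by
  obtain ⟨v, hv, h2⟩ := Finset.exists_ne_zero_of_sum_ne_zero h
  refine ⟨v, hv, ?_, ?_⟩
  · intro h3; simp [h3] at h2
  · intro h3; simp [h3] at h2

lemma lift_cycle (n d : ℕ) (hn : 1 ≤ n) (X : Finset (Finset ℕ)) (hX : X ⊆ simplices (rng n) d)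
    (hb : bd X = ∅) : ∃ w : Finset ℕ → ℤ, (∀ σ, w σ ≠ 0 → σ ∈ simplices (rng n) d) ∧
      (∀ τ, DD n w τ = 0) ∧ ∀ σ, (w σ : ZMod 2) = ind X σ := by
  have h1n : 1 ∈ rng n := by simp [rng, hn]
  set w0 : Finset ℕ → ℤ := fun ρ => if ρ ∈ X ∧ 1 ∉ ρ then 1 else 0 with hw0
  have w0_1 : ∀ ρ, 1 ∈ ρ → w0 ρ = 0 := by intro ρ h; simp [hw0, h]
  have w0_X : ∀ ρ, w0 ρ ≠ 0 → ρ ∈ X := by intro ρ h; by_contra h2; simp [hw0, h2] at h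
  have D0_1 : ∀ ρ, 1 ∈ ρ → DD n w0 ρ = 0 := by
    intro ρ h
    by_contra h2
    obtain ⟨v, _, _, h3⟩ := DD_ne h2
    exact h3 (w0_1 _ (by simp [h]))
  set w : Finset ℕ → ℤ := fun σ => if 1 ∈ σ then - DD n w0 (σ.erase 1) else w0 σ with hw
  have hchain : ∀ σ, w σ ≠ 0 → σ ∈ simplices (rng n) d := by
    intro σ hσ
    by_cases h1 : 1 ∈ σ
    · simp only [hw, h1, if_true, ne_eq, neg_eq_zero] at hσ
      obtain ⟨v, _, hv2, h3⟩ := DD_ne hσ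
      have h4 := mem_simp.1 (hX (w0_X _ h3))
      rw [Finset.card_insert_of_notMem hv2, Finset.card_erase_of_mem h1] at h4
      rw [mem_simp]
      constructor
      · intro x hx
        by_cases hx1 : x = 1
        · rw [hx1]; exact h1n
        · exact h4.1 (by simp [hx, hx1])
      · have := Finset.card_pos.2 ⟨1, h1⟩
        omega
    · simp only [hw, h1, if_false] at hσ
      exact hX (w0_X _ hσ)
  refine ⟨w, hchain, ?_, ?_⟩
  · intro τ
    by_cases hτ : τ ⊆ rng n
    swap
    · by_contra h2
      obtain ⟨v, _, _, h3⟩ := DD_ne h2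
      exact hτ ((Finset.subset_insert _ _).trans (mem_simp.1 (hchain _ h3)).1)
    by_cases h1 : 1 ∈ τ
    · have h2 : DD n w τ = DD n (DD n w0) (τ.erase 1) := by
        unfold DD
        apply Finset.sum_congr rfl
        intro v hv
        have hv1 : 1 ≤ v := by simp [rng] at hv; exact hv.1
        by_cases hvt : v ∈ τ
        · rw [if_neg (by simpa using hvt)]
          by_cases hv2 : v = 1
          · subst hv2
            have := D0_1 (insert 1 (τ.erase 1)) (by simp)
            unfold DD at this
            rw [this]; simp
          · rw [if_neg (by simp [hvt, hv2])]
        · have hv2 : v ≠ 1 := by rintro rfl; exact hvt h1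
          rw [if_pos hvt, if_pos (by simp [hvt])]
          have e1 : w (insert v τ) = - DD n w0 (insert v (τ.erase 1)) := by
            simp only [hw, mem_insert, h1, or_true, if_true]
            rw [Finset.erase_insert_of_ne hv2]
          have e2 := sgn_insert (R := ℤ) v 1 (τ.erase 1) (by simp)
          rw [Finset.insert_erase h1, if_pos (by omega)] at e2
          rw [e1, e2]
          unfold DD
          ring
      rw [h2, DD_DD]
    · have key : DD n w τ = w (insert 1 τ) + DD n w0 τ := by
        unfold DD
        rw [← Finset.add_sum_erase _ _ h1n, ← Finset.add_sum_erase (rng n) _ h1n]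
        have e0 : τ.filter (· < 1) = ∅ := by
          rw [Finset.filter_eq_empty_iff]
          intro x hx
          have := hτ hx
          simp only [rng, mem_Icc] at this
          omega
        rw [if_pos h1, if_pos h1, e0, w0_1 (insert 1 τ) (by simp)]
        simp only [card_empty, pow_zero, one_mul, zero_add]
        congr 1
        apply Finset.sum_congr rfl
        intro v hv
        have hv1 : v ≠ 1 := (Finset.mem_erase.1 hv).1
        have : w (insert v τ) = w0 (insert v τ) := by
          simp only [hw, mem_insert, h1, or_false]
          rw [if_neg (Ne.symm hv1)]
        rw [this]
      rw [key]
      simp [hw, Finset.erase_insert h1]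
  · intro σ
    by_cases h1 : 1 ∈ σ
    · have h3 := (bd_iff n d X hX).1 hb (σ.erase 1)
      have h4 := DD_cast (Int.castRingHom (ZMod 2)) n w0 (σ.erase 1)
      have h5 : DD n (ind X) (σ.erase 1) =
          ind X σ + DD n (fun σ => (Int.castRingHom (ZMod 2)) (w0 σ)) (σ.erase 1) := by
        have hm : (-1 : ZMod 2) = 1 := by decide
        unfold DD
        rw [hm, ← Finset.add_sum_erase _ _ h1n, ← Finset.add_sum_erase (rng n) _ h1n,
          if_pos (by simp), if_pos (by simp), Finset.insert_erase h1]
        simp only [w0_1 σ h1, one_pow, one_mul, map_zero, mul_zero, zero_add]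
        congr 1
        apply Finset.sum_congr rfl
        intro v hv
        have hv1 : v ≠ 1 := (Finset.mem_erase.1 hv).1
        have : 1 ∉ insert v (σ.erase 1) := by simp [Ne.symm hv1]
        simp only [ind, hw0, this]
        simp
      rw [h3, ← h4] at h5
      simp only [hw, h1, if_true, Int.cast_neg]
      exact (eq_neg_of_add_eq_zero_left h5.symm).symm
    · simp [hw, h1, hw0, ind]

lemma prim {α : Type*} (s : Finset α) (c : α → ℚ) (h : ∃ a ∈ s, c a ≠ 0) :
    ∃ (q : ℚ) (z : α → ℤ), q ≠ 0 ∧ (∀ a ∈ s, (z a : ℚ) = q * c a) ∧ ∃ a ∈ s, Odd (z a) := by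
  classical
  obtain ⟨b, hb⟩ := IsLocalization.exist_integer_multiples_of_finset (nonZeroDivisors ℤ) (s.image c)
  have hb0 : ((b : ℤ) : ℚ) ≠ 0 := by
    exact_mod_cast nonZeroDivisors.ne_zero b.2
  have : ∀ a, ∃ y : ℤ, a ∈ s → (y : ℚ) = (b : ℤ) * c a := by
    intro a
    by_cases ha : a ∈ s
    · obtain ⟨y, hy⟩ := hb (c a) (Finset.mem_image_of_mem _ ha)
      refine ⟨y, fun _ => ?_⟩
      simpa [Algebra.smul_def] using hy
    · exact ⟨0, fun h => absurd h ha⟩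
  choose f hf using this
  obtain ⟨a0, ha0, hc0⟩ := h
  obtain ⟨g, hg, hg1⟩ := Finset.extract_gcd f ⟨a0, ha0⟩
  have hG : s.gcd f ≠ 0 := by
    intro h0
    have h1 := hf a0 ha0
    rw [hg a0 ha0, h0] at h1
    simp at h1
    tauto
  have hG' : ((s.gcd f : ℤ) : ℚ) ≠ 0 := by exact_mod_cast hG
  refine ⟨(b : ℤ) / (s.gcd f : ℤ), g, div_ne_zero hb0 hG', ?_, ?_⟩
  · intro a ha
    have h1 := hf a ha
    rw [hg a ha] at h1
    push_cast at h1
    field_simp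
    linarith
  · by_contra hcon
    push Not at hcon
    have : (2 : ℤ) ∣ s.gcd g := Finset.dvd_gcd fun a ha =>
      (Int.not_odd_iff_even.1 (by simpa using hcon a ha)).two_dvd
    rw [hg1] at this
    omega

lemma exists_cycle (n d : ℕ) (hn : 1 ≤ n) (Z : Finset (Finset ℕ))
    (hZ : Z ⊆ simplices (rng n) d) (hne : Z.Nonempty) (hbZ : bd Z = ∅) (B : Finset (Finset ℕ))
    (hZB : Disjoint Z B)
    (X : Finset ℕ → Finset (Finset ℕ)) (hX : ∀ b ∈ B, X b ⊆ simplices (rng n) d ∧ bd (X b) = ∅ ∧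
      b ∈ X b ∧ Disjoint (X b) (B.erase b)) :
    ∃ W : Finset ℕ → ℚ, (∀ σ, W σ ≠ 0 → σ ∈ simplices (rng n) d) ∧ (∀ τ, DD n W τ = 0) ∧ W ≠ 0 ∧
      ∀ b ∈ B, W b = 0 := by
  have hl : ∀ i : Option B, ∃ w : Finset ℕ → ℤ, (∀ σ, w σ ≠ 0 → σ ∈ simplices (rng n) d) ∧
      (∀ τ, DD n w τ = 0) ∧ ∀ σ, (w σ : ZMod 2) = ind (i.elim Z (fun b => X b)) σ := by
    intro i
    cases i with
    | none => exact lift_cycle n d hn Z hZ hbZ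
    | some b => exact lift_cycle n d hn (X b) (hX b b.2).1 (hX b b.2).2.1
  choose u hu1 hu2 hu3 using hl
  let M : Matrix B (Option B) ℚ := fun b i => (u i b : ℚ)
  obtain ⟨c, hcM, hc0⟩ : ∃ c : Option B → ℚ, M.mulVec c = 0 ∧ c ≠ 0 := by
    have hk : LinearMap.ker (Matrix.mulVecLin M) ≠ ⊥ :=
      LinearMap.ker_ne_bot_of_finrank_lt (by simp)
    obtain ⟨c, hc, hc0⟩ := (Submodule.ne_bot_iff _).1 hk
    exact ⟨c, by simpa using hc, hc0⟩
  obtain ⟨i0, hi0⟩ := Function.ne_iff.1 hc0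
  obtain ⟨q, z, hq, hz, i1, -, hi1⟩ := prim Finset.univ c ⟨i0, Finset.mem_univ _, hi0⟩
  let w : Finset ℕ → ℤ := fun σ => ∑ i, z i * u i σ
  have hwB : ∀ b ∈ B, w b = 0 := by
    intro b hb
    have h1 := congrFun hcM ⟨b, hb⟩
    simp only [Matrix.mulVec, dotProduct, Pi.zero_apply, M] at h1
    have h2 : (w b : ℚ) = q * ∑ i, (u i b : ℚ) * c i := by
      simp only [w]
      push_cast
      rw [Finset.mul_sum]
      apply Finset.sum_congr rfl
      intro i hi
      rw [hz i hi]; ring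
    rw [h1, mul_zero] at h2
    exact_mod_cast h2
  have hw2 : ∀ σ, (w σ : ZMod 2) = (z none : ZMod 2) * ind Z σ + ∑ b : B, (z (some b) : ZMod 2) * ind (X b) σ := by
    intro σ
    simp only [w]
    push_cast
    rw [Fintype.sum_option]
    simp only [hu3, Option.elim]
  have hzb : ∀ b : B, (z (some b) : ZMod 2) = 0 := by
    intro b
    have h1 := hw2 b
    rw [hwB b b.2, Finset.sum_eq_single b] at h1
    · have h2 : ind Z b = 0 := by
        unfold ind; rw [if_neg (Finset.disjoint_right.1 hZB b.2)]
      have h3 : ind (X b) b = 1 := by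
        unfold ind; rw [if_pos (hX b b.2).2.2.1]
      rw [h2, h3] at h1
      simpa using h1.symm
    · intro b' _ hbb
      have h2 : ind (X b') b = 0 := by
        unfold ind
        rw [if_neg]
        apply Finset.disjoint_right.1 (hX b' b'.2).2.2.2
        rw [Finset.mem_erase]
        exact ⟨fun h => hbb (Subtype.ext h.symm), b.2⟩
      rw [h2, mul_zero]
    · simp
  have hz0 : (z none : ZMod 2) = 1 := by
    cases i1 with
    | none => exact ZMod.intCast_eq_one_iff_odd.2 hi1
    | some b =>
      have := hzb b
      rw [ZMod.intCast_eq_one_iff_odd.2 hi1] at this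
      exact absurd this (by decide)
  refine ⟨fun σ => (w σ : ℚ), ?_, ?_, ?_, ?_⟩
  · intro σ hσ
    have h1 : w σ ≠ 0 := fun h => hσ (by simp [h])
    obtain ⟨i, _, hi⟩ := Finset.exists_ne_zero_of_sum_ne_zero h1
    exact hu1 i σ (right_ne_zero_of_mul hi)
  · intro τ
    have h1 := DD_cast (Int.castRingHom ℚ) n w τ
    have h2 : DD n w τ = 0 := by
      have := DD_lin n Finset.univ z u τ
      simp only [hu2, mul_zero, Finset.sum_const_zero] at this
      exact this
    rw [h2, map_zero] at h1
    exact h1.symm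
  · intro h0
    obtain ⟨σ, hσ⟩ := hne
    have h1 : w σ = 0 := by
      have := congrFun h0 σ
      simpa using this
    have h2 := hw2 σ
    simp [h1, hz0, hzb, ind, hσ] at h2
  · intro b hb
    simp [hwB b hb]

lemma supp_contains (n d : ℕ) (Z B : Finset (Finset ℕ))
    (hB : ∀ X ⊆ simplices (rng n) d, bd X = ∅ → Disjoint X B → X = ∅ ∨ X = Z)
    (W : Finset ℕ → ℚ) (hW : ∀ σ, W σ ≠ 0 → σ ∈ simplices (rng n) d) (hD : ∀ τ, DD n W τ = 0)
    (h0 : W ≠ 0) (hWB : ∀ b ∈ B, W b = 0) : ∀ σ ∈ Z, W σ ≠ 0 := by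
  obtain ⟨σ0, hσ0⟩ := Function.ne_iff.1 h0
  obtain ⟨q, z, hq, hz, σ1, hs1, hσ1⟩ := prim (simplices (rng n) d) W ⟨σ0, hW _ hσ0, hσ0⟩
  let w : Finset ℕ → ℤ := fun σ => if σ ∈ simplices (rng n) d then z σ else 0
  have hw : ∀ σ, (w σ : ℚ) = q * W σ := by
    intro σ
    by_cases h : σ ∈ simplices (rng n) d
    · simp only [w, h, if_true]; exact hz σ h
    · have : W σ = 0 := by
        by_contra h2; exact h (hW σ h2)
      simp [w, h, this]
  have hDw : ∀ τ, DD n w τ = 0 := by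
    intro τ
    have h1 := DD_cast (Int.castRingHom ℚ) n w τ
    have h2 := DD_lin n {()} (fun _ => q) (fun _ => W) τ
    simp only [Finset.sum_singleton, hD, mul_zero] at h2
    have h3 : (fun σ => (Int.castRingHom ℚ) (w σ)) = fun σ => q * W σ := funext hw
    rw [h3, h2] at h1
    simpa using h1
  have hr := reduce n d w hDw (by
    intro σ h
    by_contra h2
    simp [w, h2] at h)
  rcases hB _ (Finset.filter_subset _ _) hr (by
    rw [Finset.disjoint_right]
    intro b hb h
    have h1 := hw b
    rw [hWB b hb, mul_zero] at h1
    have h2 : w b = 0 := by exact_mod_cast h1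
    simp [h2] at h) with h | h
  · have : σ1 ∈ (simplices (rng n) d).filter fun σ => Odd (w σ) := by
      simp only [mem_filter, hs1, true_and, w, if_true]
      exact hσ1
    rw [h] at this
    simp at this
  · intro σ hσ hc
    rw [← h] at hσ
    have h1 := hw σ
    rw [hc, mul_zero] at h1
    have h2 : w σ = 0 := by exact_mod_cast h1
    simp [h2] at hσ

/-- Every simple `d`-cycle `Z` on `[n]` over `F_2` is contained in the support of some
simple rational `d`-cycle on `[n]`. -/
theorem simple_f2_cycle_in_simple_q_cycle (n d : ℕ) (Z : Finset (Finset ℕ))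
    (hZ : Z ⊆ simplices (rng n) d) (hZsimple : IsSimpleCycle Z) :
    ∃ W : Finset ℕ → ℚ, IsSimpleQCycle n d W ∧ ↑Z ⊆ Function.support W := by
  classical
  obtain ⟨hne, hbZ, hmin⟩ := hZsimple
  have hne' : Z.Nonempty := Finset.nonempty_iff_ne_empty.2 hne
  have hn : 1 ≤ n := by
    obtain ⟨σ, hσ⟩ := hne'
    have h1 := mem_simp.1 (hZ hσ)
    have h2 := Finset.card_le_card h1.1
    simp only [rng, Nat.card_Icc] at h2
    omega
  let P : Finset (Finset ℕ) → Prop := fun B => Disjoint Z B ∧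
    ∀ X ⊆ simplices (rng n) d, bd X = ∅ → Disjoint X B → X = ∅ ∨ X = Z
  have hP0 : ∃ k, ∃ B, P B ∧ B.card = k := by
    refine ⟨_, simplices (rng n) d \ Z, ⟨Finset.disjoint_sdiff, ?_⟩, rfl⟩
    intro X hX hb hd
    have hXZ : X ⊆ Z := by
      intro x hx
      by_contra h
      exact Finset.disjoint_left.1 hd hx (by simp [h, hX hx])
    by_contra hcon
    push Not at hcon
    exact hmin X (lt_of_le_of_ne hXZ hcon.2) (by simpa [Finset.nonempty_iff_ne_empty] using hcon.1) hb
  obtain ⟨B, hPB, hBk⟩ := Nat.find_spec hP0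
  have hBmin : ∀ b ∈ B, ¬ P (B.erase b) := by
    intro b hb h
    apply Nat.find_min hP0 (m := (B.erase b).card) _ ⟨_, h, rfl⟩
    rw [← hBk]
    exact Finset.card_erase_lt_of_mem hb
  have hXex : ∀ b, ∃ X, b ∈ B → X ⊆ simplices (rng n) d ∧ bd X = ∅ ∧
      b ∈ X ∧ Disjoint X (B.erase b) := by
    intro b
    by_cases hb : b ∈ B
    swap
    · exact ⟨∅, fun h => absurd h hb⟩
    by_contra hcon
    push Not at hcon
    apply hBmin b hb
    refine ⟨hPB.1.mono_right (Finset.erase_subset _ _), ?_⟩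
    intro X h1 h2 h3
    apply hPB.2 X h1 h2
    have h4 : b ∉ X := fun h => (hcon X).2 h1 h2 h h3
    rw [← Finset.insert_erase hb, Finset.disjoint_insert_right]
    exact ⟨h4, h3⟩
  choose X hX using hXex
  let Q : (Finset ℕ → ℚ) → Prop := fun W => (∀ σ, W σ ≠ 0 → σ ∈ simplices (rng n) d) ∧
    (∀ τ, DD n W τ = 0) ∧ W ≠ 0 ∧ ∀ b ∈ B, W b = 0
  have hQ0 : ∃ k, ∃ W, Q W ∧ (Function.support W).ncard = k := by
    obtain ⟨W, hW⟩ := exists_cycle n d hn Z hZ hne' hbZ B hPB.1 X hX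
    exact ⟨_, W, hW, rfl⟩
  obtain ⟨W, hQW, hWk⟩ := Nat.find_spec hQ0
  refine ⟨W, ⟨⟨hQW.1, ?_⟩, hQW.2.2.1, ?_⟩, ?_⟩
  · funext τ
    rw [rbd_eq_DD n d W hQW.1]
    exact hQW.2.1 τ
  · intro W' hW' hss
    by_contra h0
    apply Nat.find_min hQ0 (m := (Function.support W').ncard) _ ⟨W', ⟨hW'.1, ?_, h0, ?_⟩, rfl⟩
    · rw [← hWk]
      refine Set.ncard_lt_ncard hss ?_
      apply Set.Finite.subset (Finset.finite_toSet (simplices (rng n) d))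
      intro σ hσ
      exact hQW.1 σ hσ
    · intro τ
      rw [← rbd_eq_DD n d W' hW'.1, hW'.2]
      rfl
    · intro b hb
      by_contra h
      exact hss.1 h (hQW.2.2.2 b hb)
  · intro σ hσ
    exact supp_contains n d Z B hPB.2 W hQW.1 hQW.2.1 hQW.2.2.1 hQW.2.2.2 σ hσ
end

section
/- Let F be a set of d-simplices on [n] that is acyclic over F_2 (no nonempty subset of F has empty F_2-boundary). Then F is acyclic over Q: there is no nonzero rational d-cycle whose support is contained in F. -/
open Finset symmDiff

/-- The inner sum of the boundary, reduced mod 2. -/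
lemma inner_sum_mod_two (σ τ : Finset ℕ) (a : ZMod 2) :
    (∑ v ∈ σ, if σ.erase v = τ then a else 0) =
      if τ ⊆ σ ∧ τ.card + 1 = σ.card then a else 0 := by
  split_ifs with h
  · obtain ⟨h1, h2⟩ := h
    have hc : (σ \ τ).card = 1 := by
      rw [Finset.card_sdiff_of_subset h1]; omega
    obtain ⟨u, hu⟩ := Finset.card_eq_one.mp hc
    have hu' : u ∈ σ \ τ := by rw [hu]; simp
    rw [Finset.mem_sdiff] at hu'
    have he : σ.erase u = τ := by
      symm
      apply Finset.eq_of_subset_of_card_le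
      · intro x hx
        rw [Finset.mem_erase]
        exact ⟨fun hxu => hu'.2 (hxu ▸ hx), h1 hx⟩
      · rw [Finset.card_erase_of_mem hu'.1]; omega
    rw [Finset.sum_eq_single_of_mem u hu'.1]
    · simp [he]
    · intro v hv hvu
      rw [if_neg]
      intro hev
      have : u ∈ σ.erase v := Finset.mem_erase.mpr ⟨hvu.symm, hu'.1⟩
      rw [hev] at this
      exact hu'.2 this
  · apply Finset.sum_eq_zero
    intro v hv
    rw [if_neg]
    rintro rfl
    exact h ⟨Finset.erase_subset _ _, Finset.card_erase_add_one hv⟩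

/-- An integral cycle supported in an `F_2`-acyclic set has even coefficients. -/
lemma even_of_int_cycle (n d : ℕ) (F : Finset (Finset ℕ))
    (hF : F ⊆ simplices (rng n) d) (hacy : IsAcyclic F) (w : Finset ℕ → ℤ)
    (hw : ∀ σ, w σ ≠ 0 → σ ∈ F) (hb : rbd n d (fun σ => (w σ : ℚ)) = 0) (ρ : Finset ℕ) :
    Even (w ρ) := by
  by_contra hodd
  rw [Int.not_even_iff_odd] at hodd
  have hρ : ρ ∈ F.filter fun σ => Odd (w σ) := by
    rw [Finset.mem_filter]
    refine ⟨hw ρ ?_, hodd⟩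
    intro h0
    rw [h0] at hodd
    exact absurd hodd (by decide)
  have hne := hacy (F.filter fun σ => Odd (w σ)) (Finset.filter_subset _ _)
    (Finset.ne_empty_of_mem hρ)
  obtain ⟨τ, hτ⟩ := Finset.nonempty_iff_ne_empty.mpr hne
  unfold bd at hτ
  have hcard := (Finset.mem_filter.mp hτ).2
  have hq := congrFun hb τ
  have hz : (∑ σ ∈ simplices (rng n) d, ∑ v ∈ σ,
      if σ.erase v = τ then (-1 : ℤ) ^ (σ.filter (· < v)).card * w σ else 0) = 0 := by
    have : ((∑ σ ∈ simplices (rng n) d, ∑ v ∈ σ,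
      if σ.erase v = τ then (-1 : ℤ) ^ (σ.filter (· < v)).card * w σ else 0 : ℤ) : ℚ) = 0 := by
      push_cast
      exact hq
    exact_mod_cast this
  have h2 := congrArg (fun z : ℤ => (z : ZMod 2)) hz
  have hneg : (-1 : ZMod 2) = 1 := by decide
  push_cast at h2
  simp only [hneg, one_pow, one_mul, inner_sum_mod_two] at h2
  rw [← ZMod.natCast_eq_one_iff_odd] at hcard
  rw [Finset.card_eq_sum_ones, Finset.sum_filter, Finset.sum_filter] at hcard
  push_cast at hcard
  rw [Finset.sum_subset hF] at hcard
  · have : (1 : ZMod 2) = 0 := by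
      refine hcard.symm.trans (Eq.trans ?_ h2)
      apply Finset.sum_congr rfl
      intro σ _
      rcases Int.even_or_odd (w σ) with he | ho
      · have h0 : ((w σ : ℤ) : ZMod 2) = 0 := by
          rw [ZMod.intCast_zmod_eq_zero_iff_dvd]; exact_mod_cast he.two_dvd
        rw [if_neg (Int.not_odd_iff_even.mpr he), h0]
        simp
      · have h1 : ((w σ : ℤ) : ZMod 2) = 1 := by
          rwa [ZMod.intCast_eq_one_iff_odd]
        rw [if_pos ho, h1]
    exact absurd this (by decide)
  · intro σ _ hσ
    rw [if_neg]
    intro ho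
    apply hσ
    apply hw
    intro h0
    rw [h0] at ho
    exact absurd ho (by decide)

lemma rbd_smul (n d : ℕ) (c : ℚ) (C : Finset ℕ → ℚ) (h : rbd n d C = 0) :
    rbd n d (fun σ => c * C σ) = 0 := by
  funext τ
  have h1 := congrFun h τ
  have : rbd n d (fun σ => c * C σ) τ = c * rbd n d C τ := by
    unfold rbd
    simp only [Finset.mul_sum, mul_ite, mul_zero]
    refine Finset.sum_congr rfl fun σ _ => Finset.sum_congr rfl fun v _ => ?_
    split_ifs
    · ring
    · rfl
  rw [this, h1]
  simp

lemma pow_dvd_of_int_cycle (n d : ℕ) (F : Finset (Finset ℕ))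
    (hF : F ⊆ simplices (rng n) d) (hacy : IsAcyclic F) (k : ℕ) : ∀ (w : Finset ℕ → ℤ),
    (∀ σ, w σ ≠ 0 → σ ∈ F) → rbd n d (fun σ => (w σ : ℚ)) = 0 → ∀ ρ, 2 ^ k ∣ w ρ := by
  induction k with
  | zero => intro w _ _ ρ; simp
  | succ k ih =>
    intro w hw hb ρ
    have hev := even_of_int_cycle n d F hF hacy w hw hb
    choose u hu using fun σ => (hev σ).two_dvd
    have hk := ih u (fun σ h => hw σ (by rw [hu]; simpa using h)) (by
      have := rbd_smul n d (1 / 2) _ hb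
      convert this using 2
      funext σ
      rw [hu σ]
      push_cast
      ring) ρ
    rw [hu ρ, pow_succ']
    exact mul_dvd_mul_left 2 hk

/-- A set `F` of `d`-simplices on `[n]` that is acyclic over `F_2` is acyclic over `ℚ`:
no nonzero rational `d`-cycle has support contained in `F`. -/
theorem f2_acyclic_implies_q_acyclic (n d : ℕ) (F : Finset (Finset ℕ))
    (hF : F ⊆ simplices (rng n) d) (hacy : IsAcyclic F) :
    ∀ W : Finset ℕ → ℚ, (∀ σ, W σ ≠ 0 → σ ∈ F) → rbd n d W = 0 → W = 0 := by
  intro W hW hb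
  have hD : (∏ σ ∈ F, ((W σ).den : ℤ)) ≠ 0 :=
    Finset.prod_ne_zero_iff.mpr fun σ _ => by exact_mod_cast (W σ).den_ne_zero
  set D : ℤ := ∏ σ ∈ F, ((W σ).den : ℤ) with hDdef
  have hint : ∀ σ, ∃ z : ℤ, (z : ℚ) = (D : ℚ) * W σ := by
    intro σ
    by_cases h : W σ = 0
    · exact ⟨0, by simp [h]⟩
    · obtain ⟨e, he⟩ : ((W σ).den : ℤ) ∣ D := Finset.dvd_prod_of_mem _ (hW σ h)
      refine ⟨e * (W σ).num, ?_⟩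
      rw [he]
      push_cast
      rw [← Rat.mul_den_eq_num (W σ)]
      ring
  choose w hw using hint
  have hDq : (D : ℚ) ≠ 0 := by exact_mod_cast hD
  have hbw : rbd n d (fun σ => (w σ : ℚ)) = 0 := by
    simp only [hw]
    exact rbd_smul n d _ _ hb
  have hsupp : ∀ σ, w σ ≠ 0 → σ ∈ F := by
    intro σ h
    apply hW
    intro h0
    apply h
    have := hw σ
    rw [h0, mul_zero] at this
    exact_mod_cast this
  funext σ
  have hz : w σ = 0 := by
    apply Int.eq_zero_of_abs_lt_dvd
      (pow_dvd_of_int_cycle n d F hF hacy (w σ).natAbs w hsupp hbw σ)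
    rw [Int.abs_eq_natAbs]
    exact_mod_cast Nat.lt_two_pow_self
  have := hw σ
  rw [hz] at this
  simpa [hDq] using this.symm
end

section
/- Let n ≥ 4. The maximum size of a simple (n-3)-cycle on [n] over F_2 equals ⌊n²/4⌋. -/
open Finset symmDiff

/-- `x y` is an edge of the complementary graph of `Y`. -/
def cEdge (n : ℕ) (Y : Finset (Finset ℕ)) (x y : ℕ) : Prop := rng n \ {x, y} ∈ Y

lemma cEdge_comm (n : ℕ) (Y : Finset (Finset ℕ)) (x y : ℕ) : cEdge n Y x y ↔ cEdge n Y y x := by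
  unfold cEdge; rw [Finset.pair_comm]

lemma card_rng (n : ℕ) : (rng n).card = n := by simp [rng]

lemma mem_simp_exists {n : ℕ} (hn : 4 ≤ n) {σ : Finset ℕ} (h : σ ∈ simplices (rng n) (n - 3)) :
    ∃ x ∈ rng n, ∃ y ∈ rng n, x ≠ y ∧ σ = rng n \ {x, y} := by
  simp only [simplices, Finset.mem_filter, Finset.mem_powerset] at h
  obtain ⟨hs, hc⟩ := h
  have h2 : (rng n \ σ).card = 2 := by
    rw [Finset.card_sdiff_of_subset hs, card_rng, hc]; omega
  obtain ⟨x, y, hxy, he⟩ := Finset.card_eq_two.1 h2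
  have hx : x ∈ rng n \ σ := by rw [he]; simp
  have hy : y ∈ rng n \ σ := by rw [he]; simp
  refine ⟨x, (Finset.mem_sdiff.1 hx).1, y, (Finset.mem_sdiff.1 hy).1, hxy, ?_⟩
  rw [← he, Finset.sdiff_sdiff_eq_self hs]

lemma simp_of_pair {n : ℕ} (hn : 4 ≤ n) {x y : ℕ} (hx : x ∈ rng n) (hy : y ∈ rng n) (hxy : x ≠ y) :
    rng n \ {x, y} ∈ simplices (rng n) (n - 3) := by
  simp only [simplices, Finset.mem_filter, Finset.mem_powerset]
  refine ⟨Finset.sdiff_subset, ?_⟩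
  rw [Finset.card_sdiff_of_subset, card_rng, Finset.card_pair hxy]
  · omega
  · intro z; simp; rintro (rfl | rfl) <;> assumption

lemma sdiff_pair_inj {n x y u v : ℕ} (hx : x ∈ rng n) (hy : y ∈ rng n) (hu : u ∈ rng n)
    (hv : v ∈ rng n) (h : rng n \ {x, y} = rng n \ {u, v}) :
    (x = u ∨ x = v) ∧ (y = u ∨ y = v) ∧ (u = x ∨ u = y) ∧ (v = x ∨ v = y) := by
  have key : ∀ z ∈ rng n, (z = x ∨ z = y) ↔ (z = u ∨ z = v) := by
    intro z hz
    have := Finset.ext_iff.1 h z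
    simp only [Finset.mem_sdiff, hz, true_and, Finset.mem_insert, Finset.mem_singleton] at this
    tauto
  exact ⟨(key x hx).1 (Or.inl rfl), (key y hy).1 (Or.inr rfl), (key u hu).2 (Or.inl rfl),
    (key v hv).2 (Or.inr rfl)⟩

open Classical in
lemma filter_eq {n : ℕ} (hn : 4 ≤ n) {Y : Finset (Finset ℕ)} (hY : Y ⊆ simplices (rng n) (n - 3))
    {x y z : ℕ} (hx : x ∈ rng n) (hy : y ∈ rng n) (hz : z ∈ rng n) (hxy : x ≠ y) (hxz : x ≠ z)
    (hyz : y ≠ z) :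
    (Y.filter fun σ => rng n \ {x, y, z} ⊆ σ ∧ (rng n \ {x, y, z}).card + 1 = σ.card) =
      ({rng n \ {x, y}, rng n \ {x, z}, rng n \ {y, z}} : Finset (Finset ℕ)).filter (· ∈ Y) := by
  have hc : (rng n \ {x, y, z}).card = n - 3 := by
    rw [Finset.card_sdiff_of_subset, card_rng, Finset.card_eq_three.2 ⟨x, y, z, hxy, hxz, hyz, rfl⟩]
    intro w; simp; rintro (rfl | rfl | rfl) <;> assumption
  ext σ
  simp only [Finset.mem_filter, Finset.mem_insert, Finset.mem_singleton]
  constructor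
  · rintro ⟨hσ, hsub, -⟩
    refine ⟨?_, hσ⟩
    obtain ⟨u, hu, v, hv, huv, rfl⟩ := mem_simp_exists hn (hY hσ)
    have key : ∀ w ∈ rng n, (w = u ∨ w = v) → (w = x ∨ w = y ∨ w = z) := by
      intro w hw h
      by_contra hcon
      have : w ∈ rng n \ {u, v} := hsub (by simp [hw]; tauto)
      simp at this
      tauto
    have h1 := key u hu (Or.inl rfl)
    have h2 := key v hv (Or.inr rfl)
    rcases h1 with rfl | rfl | rfl <;> rcases h2 with rfl | rfl | rfl <;>
      simp_all [Finset.pair_comm]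
  · rintro ⟨h, hσ⟩
    refine ⟨hσ, ?_, ?_⟩
    · rcases h with rfl | rfl | rfl <;>
      · apply Finset.sdiff_subset_sdiff (Finset.Subset.refl _)
        intro w; simp; tauto
    · have := hY hσ
      simp only [simplices, Finset.mem_filter] at this
      rw [this.2, hc]

lemma odd_card_iff {n : ℕ} (hn : 4 ≤ n) {Y : Finset (Finset ℕ)}
    (hY : Y ⊆ simplices (rng n) (n - 3))
    {x y z : ℕ} (hx : x ∈ rng n) (hy : y ∈ rng n) (hz : z ∈ rng n) (hxy : x ≠ y) (hxz : x ≠ z)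
    (hyz : y ≠ z) :
    Odd (Y.filter fun σ => rng n \ {x, y, z} ⊆ σ ∧
        (rng n \ {x, y, z}).card + 1 = σ.card).card ↔
      ¬ (cEdge n Y x y ↔ ¬ (cEdge n Y x z ↔ cEdge n Y y z)) := by
  classical
  rw [filter_eq hn hY hx hy hz hxy hxz hyz]
  have h1 : rng n \ {x, y} ≠ rng n \ {x, z} := fun h => by
    have := sdiff_pair_inj hx hy hx hz h; omega
  have h2 : rng n \ {x, y} ≠ rng n \ {y, z} := fun h => by
    have := sdiff_pair_inj hx hy hy hz h; omega
  have h3 : rng n \ {x, z} ≠ rng n \ {y, z} := fun h => by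
    have := sdiff_pair_inj hx hz hy hz h; omega
  unfold cEdge
  generalize rng n \ {x, y} = a at *
  generalize rng n \ {x, z} = b at *
  generalize rng n \ {y, z} = c at *
  by_cases ha : a ∈ Y <;> by_cases hb : b ∈ Y <;> by_cases hc : c ∈ Y <;>
    simp [Finset.filter_insert, Finset.filter_singleton, ha, hb, hc, h1, h2, h3] <;> decide

lemma bd_empty_iff {n : ℕ} (hn : 4 ≤ n) {Y : Finset (Finset ℕ)}
    (hY : Y ⊆ simplices (rng n) (n - 3)) :
    bd Y = ∅ ↔ ∀ x ∈ rng n, ∀ y ∈ rng n, ∀ z ∈ rng n, x ≠ y → x ≠ z → y ≠ z →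
      (cEdge n Y x y ↔ ¬ (cEdge n Y x z ↔ cEdge n Y y z)) := by
  constructor
  · intro h x hx y hy z hz hxy hxz hyz
    by_contra hcon
    have hodd := (odd_card_iff hn hY hx hy hz hxy hxz hyz).2 hcon
    have : rng n \ {x, y, z} ∈ bd Y := by
      simp only [bd, Finset.mem_filter, Finset.mem_biUnion, Finset.mem_powerset]
      refine ⟨?_, hodd⟩
      obtain ⟨σ, hσ⟩ := Finset.card_pos.1 hodd.pos
      simp only [Finset.mem_filter] at hσ
      exact ⟨σ, hσ.1, hσ.2.1⟩
    rw [h] at this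
    simp at this
  · intro h
    rw [Finset.eq_empty_iff_forall_notMem]
    intro τ hτ
    simp only [bd, Finset.mem_filter] at hτ
    have hodd := hτ.2
    obtain ⟨σ, hσ⟩ := Finset.card_pos.1 hodd.pos
    simp only [Finset.mem_filter] at hσ
    obtain ⟨hσY, hsub, hc⟩ := hσ
    have hs := hY hσY
    simp only [simplices, Finset.mem_filter, Finset.mem_powerset] at hs
    have hτs := hsub.trans hs.1
    have h3 : (rng n \ τ).card = 3 := by
      rw [Finset.card_sdiff_of_subset hτs, card_rng]; omega
    obtain ⟨x, y, z, hxy, hxz, hyz, he⟩ := Finset.card_eq_three.1 h3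
    have hx : x ∈ rng n \ τ := by rw [he]; simp
    have hy : y ∈ rng n \ τ := by rw [he]; simp
    have hz : z ∈ rng n \ τ := by rw [he]; simp
    have ht : τ = rng n \ {x, y, z} := by rw [← he, Finset.sdiff_sdiff_eq_self hτs]
    have hx := (Finset.mem_sdiff.1 hx).1
    have hy := (Finset.mem_sdiff.1 hy).1
    have hz := (Finset.mem_sdiff.1 hz).1
    rw [ht] at hodd
    exact (odd_card_iff hn hY hx hy hz hxy hxz hyz).1 hodd (h x hx y hy z hz hxy hxz hyz)

/-- Nested nonempty cycles of codimension two agree. -/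
lemma cycle_eq_of_subset {n : ℕ} (hn : 4 ≤ n) {Y Z : Finset (Finset ℕ)}
    (hZ : Z ⊆ simplices (rng n) (n - 3)) (hYZ : Y ⊆ Z) (hne : Y ≠ ∅) (hbY : bd Y = ∅)
    (hbZ : bd Z = ∅) : Z ⊆ Y := by
  have hY := hYZ.trans hZ
  rw [bd_empty_iff hn hY] at hbY
  rw [bd_empty_iff hn hZ] at hbZ
  have hsub : ∀ x y, cEdge n Y x y → cEdge n Z x y := fun x y h => hYZ h
  obtain ⟨σ, hσ⟩ := Finset.nonempty_iff_ne_empty.2 hne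
  obtain ⟨x, hx, y, hy, hxy, rfl⟩ := mem_simp_exists hn (hY hσ)
  have e1 : cEdge n Y x y := hσ
  have e2 := hsub _ _ e1
  have agree : ∀ z ∈ rng n, z ≠ x → (cEdge n Z x z → cEdge n Y x z) := by
    intro z hz hzx h
    by_cases hzy : z = y
    · subst hzy; exact e1
    have a := hbY x hx y hy z hz hxy (Ne.symm hzx) (Ne.symm hzy)
    have b := hbZ x hx y hy z hz hxy (Ne.symm hzx) (Ne.symm hzy)
    have c := hsub x z
    have d := hsub y z
    tauto
  intro ρ hρ
  obtain ⟨u, hu, v, hv, huv, rfl⟩ := mem_simp_exists hn (hZ hρ)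
  have e3 : cEdge n Z u v := hρ
  change cEdge n Y u v
  by_cases hux : u = x
  · subst hux; exact agree v hv (Ne.symm huv) e3
  by_cases hvx : v = x
  · subst hvx
    rw [cEdge_comm] at e3 ⊢
    exact agree u hu huv e3
  have a := hbY u hu v hv x hx huv hux hvx
  have b := hbZ u hu v hv x hx huv hux hvx
  have c := agree u hu hux
  have d := agree v hv hvx
  have c' := hsub x u
  have d' := hsub x v
  rw [cEdge_comm n Y u x, cEdge_comm n Y v x] at a
  rw [cEdge_comm n Z u x, cEdge_comm n Z v x] at b
  tauto

lemma mul_le_sq_div (a b n : ℕ) (h : a + b = n) : a * b ≤ n ^ 2 / 4 := by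
  rw [Nat.le_div_iff_mul_le (by norm_num)]
  subst h
  zify
  nlinarith [sq_nonneg ((a : ℤ) - b)]

lemma card_le_of_cycle {n : ℕ} (hn : 4 ≤ n) {Z : Finset (Finset ℕ)}
    (hZ : Z ⊆ simplices (rng n) (n - 3)) (hbZ : bd Z = ∅) : Z.card ≤ n ^ 2 / 4 := by
  classical
  rw [bd_empty_iff hn hZ] at hbZ
  have h1 : 1 ∈ rng n := by simp [rng]; omega
  set N := (rng n).filter (fun z => z ≠ 1 ∧ cEdge n Z 1 z) with hN
  have hNs : N ⊆ rng n := Finset.filter_subset _ _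
  have memN : ∀ z ∈ rng n, (z ∈ N ↔ z ≠ 1 ∧ cEdge n Z 1 z) := by
    intro z hz; simp [hN, hz]
  have cut : ∀ u ∈ rng n, ∀ v ∈ rng n, u ≠ v → cEdge n Z u v → ¬ (u ∈ N ↔ v ∈ N) := by
    intro u hu v hv huv e
    rw [memN u hu, memN v hv]
    by_cases hu1 : u = 1
    · subst hu1; simp [e, Ne.symm huv]
    by_cases hv1 : v = 1
    · subst hv1; rw [cEdge_comm] at e; simp [e, huv]
    have b := hbZ u hu v hv 1 h1 huv hu1 hv1
    rw [cEdge_comm n Z u 1, cEdge_comm n Z v 1] at b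
    tauto
  have hsub : Z ⊆ (N ×ˢ (rng n \ N)).image (fun p => rng n \ {p.1, p.2}) := by
    intro σ hσ
    obtain ⟨u, hu, v, hv, huv, rfl⟩ := mem_simp_exists hn (hZ hσ)
    have c := cut u hu v hv huv hσ
    rw [Finset.mem_image]
    by_cases huN : u ∈ N
    · exact ⟨(u, v), by simp [huN, hv]; tauto, rfl⟩
    · exact ⟨(v, u), by simp [huN, hu]; tauto, by simp [Finset.pair_comm]⟩
  calc Z.card ≤ _ := Finset.card_le_card hsub
    _ ≤ (N ×ˢ (rng n \ N)).card := Finset.card_image_le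
    _ = N.card * (rng n \ N).card := Finset.card_product _ _
    _ ≤ n ^ 2 / 4 := mul_le_sq_div _ _ _ (by
        rw [add_comm, Finset.card_sdiff_add_card_eq_card hNs, card_rng])

lemma half_mul (n : ℕ) : n / 2 * (n - n / 2) = n ^ 2 / 4 := by
  obtain ⟨k, rfl | rfl⟩ := Nat.even_or_odd' n
  · have h1 : 2 * k / 2 = k := by omega
    have h2 : 2 * k - k = k := by omega
    rw [h1, h2, show (2 * k) ^ 2 = 4 * (k * k) by ring]; omega
  · have h1 : (2 * k + 1) / 2 = k := by omega
    have h2 : 2 * k + 1 - k = k + 1 := by omega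
    rw [h1, h2, show (2 * k + 1) ^ 2 = 4 * (k * (k + 1)) + 1 by ring]; omega

/-- The complementary cut. -/
def cutZ (n : ℕ) : Finset (Finset ℕ) :=
  (Finset.Icc 1 (n / 2) ×ˢ Finset.Icc (n / 2 + 1) n).image fun p => rng n \ {p.1, p.2}

lemma cutZ_card (n : ℕ) : (cutZ n).card = n ^ 2 / 4 := by
  rw [cutZ, Finset.card_image_of_injOn, Finset.card_product, Nat.card_Icc, Nat.card_Icc,
    ← half_mul]
  · congr 1; omega
  · rintro ⟨a, b⟩ h ⟨c, d⟩ h' he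
    simp only [Finset.coe_product, Set.mem_prod, Finset.coe_Icc, Set.mem_Icc] at h h'
    have := sdiff_pair_inj (n := n) (by simp [rng]; omega) (by simp [rng]; omega)
      (by simp [rng]; omega) (by simp [rng]; omega) he
    ext <;> simp <;> omega

lemma cutZ_sub {n : ℕ} (hn : 4 ≤ n) : cutZ n ⊆ simplices (rng n) (n - 3) := by
  intro σ h
  simp only [cutZ, Finset.mem_image, Finset.mem_product, Finset.mem_Icc] at h
  obtain ⟨⟨a, b⟩, h, rfl⟩ := h
  simp only at h
  exact simp_of_pair hn (by simp [rng]; omega) (by simp [rng]; omega) (by simp; omega)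

lemma cutZ_edge {n x y : ℕ} (hx : x ∈ rng n) (hy : y ∈ rng n) :
    cEdge n (cutZ n) x y ↔ ¬ (x ≤ n / 2 ↔ y ≤ n / 2) := by
  have hx' := hx
  have hy' := hy
  simp only [rng, Finset.mem_Icc] at hx' hy'
  simp only [cEdge, cutZ, Finset.mem_image, Finset.mem_product, Finset.mem_Icc]
  constructor
  · rintro ⟨⟨a, b⟩, h, he⟩
    simp only at h he
    have := sdiff_pair_inj (n := n) (by simp [rng]; omega) (by simp [rng]; omega) hx hy he
    omega
  · intro h
    by_cases hxn : x ≤ n / 2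
    · exact ⟨(x, y), by simp only; omega, rfl⟩
    · exact ⟨(y, x), by simp only; omega, by simp [Finset.pair_comm]⟩

/-- For `n ≥ 4`, the maximum size of a simple `(n-3)`-cycle on `[n]` over `F_2` is
`⌊n²/4⌋`. -/
theorem max_simple_codim_two_cycle (n : ℕ) (hn : 4 ≤ n) :
    IsGreatest {k : ℕ | ∃ Z, Z ⊆ simplices (rng n) (n - 3) ∧ IsSimpleCycle Z ∧
      Z.card = k} (n ^ 2 / 4) := by
  constructor
  · have hb : bd (cutZ n) = ∅ := by
      rw [bd_empty_iff hn (cutZ_sub hn)]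
      intro x hx y hy z hz _ _ _
      rw [cutZ_edge hx hy, cutZ_edge hx hz, cutZ_edge hy hz]
      tauto
    refine ⟨cutZ n, cutZ_sub hn, ⟨?_, hb, ?_⟩, cutZ_card n⟩
    · intro h
      have hc := cutZ_card n
      rw [h, ← half_mul, Finset.card_empty] at hc
      have : 0 < n / 2 * (n - n / 2) := Nat.mul_pos (by omega) (by omega)
      omega
    · intro Y hY hne hbY
      exact hY.2 (cycle_eq_of_subset hn (cutZ_sub hn) hY.1 hne hbY hb)
  · rintro k ⟨Z, hZ, hs, rfl⟩
    exact card_le_of_cycle hn hZ hs.2.1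
end
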